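/- Let S be a stabilizer group in the n-qubit Pauli group with codespace projector Π = |S|⁻¹ • Σ_{S ∈ S} S, and suppose the code has distance at least d, i.e., every element of N(S) \ ⟨i⟩S has weight ≥ d. Then any two Pauli errors E_a, E_b ∈ P_n with 2·w(E_a) ≤ d − 1 and 2·w(E_b) ≤ d − 1 satisfy Π * E_aᴴ * E_b * Π = c • Π for some scalar c ∈ ℂ; i.e., all errors of weight at most (d−1)/2 can be corrected. -/

import Mathlib

/-! The operator `E = Eaᴴ * Eb` is again a Pauli operator, because elements of the Pauli group are
unitary (`conjTranspose_eq_inv`), and by subadditivity of the support (`pauliWeight_mul_le`) its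
weight is at most `w(Ea) + w(Eb) ≤ d - 1`.

Any two Pauli operators commute or anticommute (`pauli_signCommute`).
* If `E` anticommutes with some `g ∈ S`, then `g` can be absorbed into either copy of `Π`
  (`mul_codeProj`, `codeProj_mul`), so `Π E Π = Π g E Π = -Π E g Π = -Π E Π`, whence `Π E Π = 0`.
* Otherwise `E ∈ N(S)`. Having weight less than `d`, it lies in `⟨i⟩S`, say `E = i^λ g`, and then
  `Π E Π = i^λ Π`. For `d = 0` the truncated bound `d - 1 = 0` forces `w(E) = 0`, so that `E` is a
  phase times the identity and again lies in `⟨i⟩S`.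

Everything about the Pauli group rests on the normal form `i^k X^a Z^b` (`IsForm`), which is stable
under products and inverses since the `X_j` commute, the `Z_j` commute, all of them square to `1`,
and each `Z_i` commutes with each `X_j` up to sign. -/

open Matrix Complex
open scoped Classical

noncomputable section

/-- The space of `n`-qubit operators. -/
abbrev MatN (n : ℕ) : Type := Matrix (Fin n → Fin 2) (Fin n → Fin 2) ℂ

/-- The Pauli matrix `X`. -/
def PX : Matrix (Fin 2) (Fin 2) ℂ := !![0, 1; 1, 0]

/-- The Pauli matrix `Z`. -/
def PZ : Matrix (Fin 2) (Fin 2) ℂ := !![1, 0; 0, -1]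

/-- The single-qubit operator `M` acting on the tensor factor `q` and as the identity on
all other factors. -/
def actQ {Q : Type*} (q : Q) (M : Matrix (Fin 2) (Fin 2) ℂ) :
    Matrix (Q → Fin 2) (Q → Fin 2) ℂ :=
  fun v w => M (v q) (w q) * (if ∀ k, k ≠ q → v k = w k then 1 else 0)

/-- The Pauli `X` operator on the `j`-th qubit. -/
def Xop (n : ℕ) (j : Fin n) : MatN n := actQ j PX

/-- The Pauli `Z` operator on the `j`-th qubit. -/
def Zop (n : ℕ) (j : Fin n) : MatN n := actQ j PZ

/-- Generators of the Pauli group: `i • 1` and all `X_j`, `Z_j` (as units of the matrix ring). -/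
def pauliGens (n : ℕ) : Set (MatN n)ˣ :=
  {u | (u : MatN n) = Complex.I • 1 ∨ (∃ j, (u : MatN n) = Xop n j) ∨
    ∃ j, (u : MatN n) = Zop n j}

/-- The `n`-qubit Pauli group `P_n`: the subgroup of the units of the matrix ring generated by
`i • 1` together with all `X_j` and `Z_j`. -/
def PauliGroup (n : ℕ) : Subgroup (MatN n)ˣ := Subgroup.closure (pauliGens n)

/-- `X^a = ∏ⱼ X_j^(a_j)` for `a : Fin n → ZMod 2`. -/
def XpowVec (n : ℕ) (a : Fin n → ZMod 2) : MatN n :=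
  (List.ofFn fun j => Xop n j ^ (a j).val).prod

/-- `Z^b = ∏ⱼ Z_j^(b_j)` for `b : Fin n → ZMod 2`. -/
def ZpowVec (n : ℕ) (b : Fin n → ZMod 2) : MatN n :=
  (List.ofFn fun j => Zop n j ^ (b j).val).prod

/-- The codespace projector `Π = |S|⁻¹ • Σ_{g ∈ S} g`. -/
def codeProj (n : ℕ) (S : Subgroup (MatN n)ˣ) : MatN n :=
  (Nat.card ↥S : ℂ)⁻¹ • ∑ᶠ g ∈ (S : Set (MatN n)ˣ), (g : MatN n)

/-- The set `⟨i⟩S = {i^λ • S | λ ∈ ZMod 4, S ∈ S}` of stabilizers up to phase. -/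
def phaseStab (n : ℕ) (S : Subgroup (MatN n)ˣ) : Set (MatN n) :=
  {M | ∃ lam : ZMod 4, ∃ g ∈ S, M = Complex.I ^ lam.val • ((g : (MatN n)ˣ) : MatN n)}

/-- The centralizer `N(S)` of the stabilizer group `S` in the Pauli group `P_n`,
as a set of matrices. -/
def NSmat (n : ℕ) (S : Subgroup (MatN n)ˣ) : Set (MatN n) :=
  {M | (∃ u ∈ PauliGroup n, (u : MatN n) = M) ∧
    ∀ g ∈ S, M * (g : MatN n) = (g : MatN n) * M}

/-- The weight of a Pauli operator: writing `P = i^λ • (X^a * Z^b)`, the number of indices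
`j` with `(a_j, b_j) ≠ (0, 0)`, i.e. the number of tensor factors on which `P` acts
nontrivially. -/
def pauliWeight (n : ℕ) (P : MatN n) : ℕ :=
  sInf {w | ∃ (lam : ZMod 4) (a b : Fin n → ZMod 2),
    P = Complex.I ^ lam.val • (XpowVec n a * ZpowVec n b) ∧
    w = (Finset.univ.filter fun j => ¬(a j = 0 ∧ b j = 0)).card}


/-! ### Single-qubit operators -/

lemma actQ_mul_apply {n : ℕ} (q : Fin n) (M : Matrix (Fin 2) (Fin 2) ℂ) (B : MatN n)
    (v w : Fin n → Fin 2) :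
    (actQ q M * B) v w = ∑ t, M (v q) t * B (Function.update v q t) w := by
  rw [Matrix.mul_apply]
  symm
  apply Finset.sum_of_injOn (fun t => Function.update v q t)
  · intro s _ t _ h
    exact Function.update_injective v q h
  · simp
  · intro u _ hu
    -- a `u` outside the image of `t ↦ update v q t` differs from `v` somewhere off `q`
    have : ¬ ∀ k, k ≠ q → v k = u k := by
      intro h
      apply hu
      refine ⟨u q, by simp, ?_⟩
      funext k
      by_cases hk : k = q
      · subst hk; simp
      · simp [hk, h k hk]
    simp [actQ, this]
  · intro t _
    have : ∀ k, k ≠ q → v k = Function.update v q t k := by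
      intro k hk; simp [hk]
    simp only [actQ, if_pos this]
    simp

lemma actQ_mul {n : ℕ} (q : Fin n) (M N : Matrix (Fin 2) (Fin 2) ℂ) :
    (actQ q M * actQ q N : MatN n) = actQ q (M * N) := by
  ext v w
  rw [actQ_mul_apply]
  have h : ∀ t, (∀ k, k ≠ q → Function.update v q t k = w k) ↔ ∀ k, k ≠ q → v k = w k := by
    intro t
    refine forall₂_congr fun k hk => ?_
    simp [hk]
  simp only [actQ, h, Matrix.mul_apply, Finset.sum_mul]
  simp

lemma actQ_one {n : ℕ} (q : Fin n) : (actQ q 1 : MatN n) = 1 := by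
  ext v w
  simp only [actQ, Matrix.one_apply]
  by_cases h : v = w
  · subst h; simp
  · by_cases h1 : v q = w q
    · have : ¬ ∀ k, k ≠ q → v k = w k := by
        intro h2
        apply h
        funext k
        by_cases hk : k = q
        · rw [hk, h1]
        · exact h2 k hk
      simp [h, this]
    · simp [h, h1]

lemma actQ_neg {n : ℕ} (q : Fin n) (M : Matrix (Fin 2) (Fin 2) ℂ) :
    (actQ q (-M) : MatN n) = - actQ q M := by
  ext v w
  simp only [actQ, Matrix.neg_apply, neg_mul]

lemma actQ_conjTranspose {n : ℕ} (q : Fin n) (M : Matrix (Fin 2) (Fin 2) ℂ) :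
    (actQ q M : MatN n)ᴴ = actQ q Mᴴ := by
  ext v w
  have h : (∀ k, k ≠ q → w k = v k) ↔ ∀ k, k ≠ q → v k = w k :=
    forall₂_congr fun k hk => eq_comm
  simp only [actQ, Matrix.conjTranspose_apply, h, star_mul']
  split_ifs <;> simp

lemma actQ_mul_ne {n : ℕ} {p q : Fin n} (hpq : p ≠ q) (M N : Matrix (Fin 2) (Fin 2) ℂ)
    (v w : Fin n → Fin 2) :
    (actQ p M * actQ q N : MatN n) v w = M (v p) (w p) * N (v q) (w q) *
      (if ∀ k, k ≠ p → k ≠ q → v k = w k then 1 else 0) := by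
  rw [actQ_mul_apply]
  have h : ∀ t, (∀ k, k ≠ q → Function.update v p t k = w k) ↔
      t = w p ∧ ∀ k, k ≠ p → k ≠ q → v k = w k := by
    intro t
    constructor
    · intro h
      refine ⟨by simpa using h p hpq, fun k hp hq => by simpa [hp] using h k hq⟩
    · rintro ⟨rfl, h⟩ k hq
      by_cases hp : k = p
      · subst hp; simp
      · simpa [hp] using h k hp hq
  simp only [actQ, h]
  rw [Finset.sum_eq_single (w p)]
  · simp [Function.update_of_ne hpq.symm]
  · intro t _ ht
    simp [ht]
  · simp

lemma actQ_commute {n : ℕ} {p q : Fin n} (hpq : p ≠ q) (M N : Matrix (Fin 2) (Fin 2) ℂ) :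
    Commute (actQ p M : MatN n) (actQ q N) := by
  ext v w
  rw [actQ_mul_ne hpq, actQ_mul_ne hpq.symm]
  have h : (∀ k, k ≠ q → k ≠ p → v k = w k) ↔ ∀ k, k ≠ p → k ≠ q → v k = w k :=
    forall_congr' fun k => ⟨fun h a b => h b a, fun h a b => h b a⟩
  simp only [h]
  ring

lemma Xop_sq (n : ℕ) (j : Fin n) : Xop n j * Xop n j = 1 := by
  rw [Xop, actQ_mul, ← actQ_one j]
  congr 1
  simp [PX, Matrix.one_fin_two]

lemma Zop_sq (n : ℕ) (j : Fin n) : Zop n j * Zop n j = 1 := by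
  rw [Zop, actQ_mul, ← actQ_one j]
  congr 1
  simp [PZ, Matrix.one_fin_two]

lemma Xop_conjTranspose (n : ℕ) (j : Fin n) : (Xop n j)ᴴ = Xop n j := by
  rw [Xop, actQ_conjTranspose]
  congr 1
  ext a b
  fin_cases a <;> fin_cases b <;> simp [PX]

lemma Zop_conjTranspose (n : ℕ) (j : Fin n) : (Zop n j)ᴴ = Zop n j := by
  rw [Zop, actQ_conjTranspose]
  congr 1
  ext a b
  fin_cases a <;> fin_cases b <;> simp [PZ]

lemma Xop_commute (n : ℕ) (i j : Fin n) : Commute (Xop n i) (Xop n j) := by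
  by_cases h : i = j
  · subst h; exact Commute.refl _
  · exact actQ_commute h _ _

lemma Zop_commute (n : ℕ) (i j : Fin n) : Commute (Zop n i) (Zop n j) := by
  by_cases h : i = j
  · subst h; exact Commute.refl _
  · exact actQ_commute h _ _

/-! ### Commutation up to sign -/

/-- `A` and `B` commute or anticommute. -/
def SignCommute {R : Type*} [Ring R] (A B : R) : Prop := A * B = B * A ∨ A * B = -(B * A)

lemma SignCommute.symm {R : Type*} [Ring R] {A B : R} (h : SignCommute A B) :
    SignCommute B A := by
  rcases h with h | h
  · exact Or.inl h.symm
  · exact Or.inr (by rw [h, neg_neg])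

lemma SignCommute.one_right {R : Type*} [Ring R] (A : R) : SignCommute A 1 :=
  Or.inl (by simp)

lemma SignCommute.mul_right {R : Type*} [Ring R] {A B C : R} (hB : SignCommute A B)
    (hC : SignCommute A C) : SignCommute A (B * C) := by
  have e : A * (B * C) = (A * B) * C := (mul_assoc _ _ _).symm
  rcases hB with hB | hB <;> rcases hC with hC | hC
  · left; rw [e, hB, mul_assoc, hC, mul_assoc]
  · right; rw [e, hB, mul_assoc, hC, mul_neg, mul_assoc]
  · right; rw [e, hB, neg_mul, mul_assoc, hC, mul_assoc]
  · left; rw [e, hB, neg_mul, mul_assoc, hC, mul_neg, neg_neg, mul_assoc]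

lemma SignCommute.mul_left {R : Type*} [Ring R] {A B C : R} (hA : SignCommute A C)
    (hB : SignCommute B C) : SignCommute (A * B) C :=
  (hA.symm.mul_right hB.symm).symm

lemma SignCommute.pow_right {R : Type*} [Ring R] {A B : R} (h : SignCommute A B) (k : ℕ) :
    SignCommute A (B ^ k) := by
  induction k with
  | zero => simpa using SignCommute.one_right A
  | succ k ih => rw [pow_succ]; exact ih.mul_right h

lemma SignCommute.listProd_right {R : Type*} [Ring R] {A : R} (l : List R)
    (h : ∀ B ∈ l, SignCommute A B) : SignCommute A l.prod := by
  induction l with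
  | nil => simpa using SignCommute.one_right A
  | cons B l ih =>
    rw [List.prod_cons]
    exact (h B (by simp)).mul_right (ih fun C hC => h C (by simp [hC]))

lemma SignCommute.smul_right {n : ℕ} {A B : MatN n} (h : SignCommute A B) (c : ℂ) :
    SignCommute A (c • B) := by
  rcases h with h | h
  · left; rw [mul_smul_comm, smul_mul_assoc, h]
  · right; rw [mul_smul_comm, smul_mul_assoc, h, smul_neg]

lemma signCommute_ZX (n : ℕ) (i j : Fin n) : SignCommute (Zop n i) (Xop n j) := by
  by_cases h : i = j
  · subst h
    right
    rw [Zop, Xop, actQ_mul, actQ_mul, ← actQ_neg]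
    congr 1
    simp [PX, PZ]
  · exact Or.inl (actQ_commute h _ _)

lemma signCommute_XpowVec {n : ℕ} {A : MatN n} (h : ∀ j, SignCommute A (Xop n j))
    (a : Fin n → ZMod 2) : SignCommute A (XpowVec n a) := by
  apply SignCommute.listProd_right
  intro B hB
  obtain ⟨j, rfl⟩ := (List.mem_ofFn' _ _).1 hB
  exact (h j).pow_right _

lemma signCommute_ZpowVec {n : ℕ} {A : MatN n} (h : ∀ j, SignCommute A (Zop n j))
    (b : Fin n → ZMod 2) : SignCommute A (ZpowVec n b) := by
  apply SignCommute.listProd_right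
  intro B hB
  obtain ⟨j, rfl⟩ := (List.mem_ofFn' _ _).1 hB
  exact (h j).pow_right _

lemma signCommute_ZpowVec_XpowVec (n : ℕ) (a b : Fin n → ZMod 2) :
    SignCommute (ZpowVec n b) (XpowVec n a) :=
  signCommute_XpowVec
    (fun j => (signCommute_ZpowVec (fun i => (signCommute_ZX n i j).symm) b).symm) a

/-! ### The operators `X^a` and `Z^b` -/

lemma listProd_map_mul {ι M : Type*} [Monoid M] (l : List ι) (f g : ι → M)
    (h : ∀ i j, Commute (f i) (g j)) :
    (l.map f).prod * (l.map g).prod = (l.map fun i => f i * g i).prod := by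
  induction l with
  | nil => simp
  | cons i l ih =>
    have hc : Commute (l.map f).prod (g i) := by
      refine Commute.list_prod_left _ _ fun x hx => ?_
      obtain ⟨j, _, rfl⟩ := List.mem_map.1 hx
      exact h j i
    simp only [List.map_cons, List.prod_cons]
    rw [← ih, mul_assoc, ← mul_assoc (l.map f).prod, hc.eq]
    simp only [mul_assoc]

lemma pow_val_add {M : Type*} [Monoid M] {x : M} (hx : x * x = 1) (a b : ZMod 2) :
    x ^ a.val * x ^ b.val = x ^ (a + b).val := by
  rw [ZMod.val_add, ← pow_add, ← pow_mod_orderOf, ← pow_mod_orderOf x (_ % 2)]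
  have h : orderOf x ∣ 2 := orderOf_dvd_of_pow_eq_one (by rw [pow_two, hx])
  rw [Nat.mod_mod_of_dvd _ h]

lemma XpowVec_add (n : ℕ) (a b : Fin n → ZMod 2) :
    XpowVec n a * XpowVec n b = XpowVec n (a + b) := by
  simp only [XpowVec, List.ofFn_eq_map]
  rw [listProd_map_mul _ _ _ fun i j => (Xop_commute n i j).pow_pow _ _]
  simp [pow_val_add (Xop_sq n _)]

lemma ZpowVec_add (n : ℕ) (a b : Fin n → ZMod 2) :
    ZpowVec n a * ZpowVec n b = ZpowVec n (a + b) := by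
  simp only [ZpowVec, List.ofFn_eq_map]
  rw [listProd_map_mul _ _ _ fun i j => (Zop_commute n i j).pow_pow _ _]
  simp [pow_val_add (Zop_sq n _)]

lemma XpowVec_zero (n : ℕ) : XpowVec n 0 = 1 := by
  simp [XpowVec, List.ofFn_const]

lemma ZpowVec_zero (n : ℕ) : ZpowVec n 0 = 1 := by
  simp [ZpowVec, List.ofFn_const]

lemma listProd_map_single {ι M : Type*} [Monoid M] (l : List ι) (hl : l.Nodup)
    (j : ι) (hj : j ∈ l) (f : ι → M) (h : ∀ i, i ≠ j → f i = 1) : (l.map f).prod = f j := by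
  rw [List.prod_map_eq_pow_single j f (fun i hi _ => h i hi), List.count_eq_one_of_mem hl hj,
    pow_one]

lemma XpowVec_single (n : ℕ) (j : Fin n) : XpowVec n (Pi.single j 1) = Xop n j := by
  rw [XpowVec, List.ofFn_eq_map, listProd_map_single _ (List.nodup_finRange n) j
    (List.mem_finRange j)]
  · simp [ZMod.val_one]
  · intro i hi; simp [hi]

lemma ZpowVec_single (n : ℕ) (j : Fin n) : ZpowVec n (Pi.single j 1) = Zop n j := by
  rw [ZpowVec, List.ofFn_eq_map, listProd_map_single _ (List.nodup_finRange n) j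
    (List.mem_finRange j)]
  · simp [ZMod.val_one]
  · intro i hi; simp [hi]

/-! ### Normal forms and weights -/

/-- `M` equals `X^a Z^b` up to a power of `i`. The exponent ranges over `ℕ` rather than `ZMod 4`,
so that phases multiply by adding exponents. -/
def IsForm (n : ℕ) (M : MatN n) (a b : Fin n → ZMod 2) : Prop :=
  ∃ k : ℕ, M = Complex.I ^ k • (XpowVec n a * ZpowVec n b)

lemma IsForm.mul {n : ℕ} {M N : MatN n} {a b a' b' : Fin n → ZMod 2}
    (hM : IsForm n M a b) (hN : IsForm n N a' b') : IsForm n (M * N) (a + a') (b + b') := by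
  obtain ⟨k, rfl⟩ := hM
  obtain ⟨l, rfl⟩ := hN
  have e : (XpowVec n a * ZpowVec n b) * (XpowVec n a' * ZpowVec n b') =
      XpowVec n a * (ZpowVec n b * XpowVec n a') * ZpowVec n b' := by
    simp only [mul_assoc]
  have e2 : XpowVec n a * (XpowVec n a' * ZpowVec n b) * ZpowVec n b' =
      XpowVec n (a + a') * ZpowVec n (b + b') := by
    rw [← XpowVec_add, ← ZpowVec_add]; simp only [mul_assoc]
  rw [IsForm, smul_mul_smul_comm, e, ← pow_add]
  rcases signCommute_ZpowVec_XpowVec n a' b with h | h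
  · exact ⟨k + l, by rw [h, e2]⟩
  · refine ⟨k + l + 2, ?_⟩
    rw [h, mul_neg, neg_mul, e2, pow_add _ _ 2, Complex.I_sq]
    simp

lemma isForm_scalar (n k : ℕ) : IsForm n (Complex.I ^ k • 1) 0 0 :=
  ⟨k, by rw [XpowVec_zero, ZpowVec_zero, one_mul]⟩

/-- Squaring `u` gives a phase, so `u⁻¹` is a phase times `u`. -/
lemma IsForm.inv {n : ℕ} {u : (MatN n)ˣ} {a b : Fin n → ZMod 2} (h : IsForm n u a b) :
    IsForm n (u⁻¹ : (MatN n)ˣ) a b := by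
  have h2 : IsForm n ((u : MatN n) * u) 0 0 := by
    have e : ∀ c : Fin n → ZMod 2, c + c = 0 := fun c =>
      funext fun j => CharTwo.add_self_eq_zero (c j)
    simpa only [e] using h.mul h
  obtain ⟨k, hk⟩ := h2
  rw [XpowVec_zero, ZpowVec_zero, one_mul] at hk
  -- `i^(3k)` is the inverse of the phase `i^k`
  have e : ((u⁻¹ : (MatN n)ˣ) : MatN n) = (Complex.I ^ (3 * k) • 1) * (u : MatN n) := by
    rw [← Units.mul_eq_one_iff_inv_eq, smul_mul_assoc, one_mul, mul_smul_comm, hk, smul_smul,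
      ← pow_add, show 3 * k + k = 4 * k by ring, pow_mul, Complex.I_pow_four, one_pow, one_smul]
  rw [e]
  simpa using (isForm_scalar n (3 * k)).mul h

lemma pauli_isForm {n : ℕ} {u : (MatN n)ˣ} (hu : u ∈ PauliGroup n) :
    ∃ a b, IsForm n (u : MatN n) a b := by
  induction hu using Subgroup.closure_induction with
  | mem u hu =>
    rcases hu with hu | ⟨j, hu⟩ | ⟨j, hu⟩
    · exact ⟨0, 0, 1, by rw [hu, XpowVec_zero, ZpowVec_zero, one_mul, pow_one]⟩
    · exact ⟨Pi.single j 1, 0, 0, by rw [hu, XpowVec_single, ZpowVec_zero]; simp⟩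
    · exact ⟨0, Pi.single j 1, 0, by rw [hu, XpowVec_zero, ZpowVec_single]; simp⟩
  | one => exact ⟨0, 0, by simpa using isForm_scalar n 0⟩
  | mul u v _ _ hu hv =>
    obtain ⟨a, b, h⟩ := hu
    obtain ⟨a', b', h'⟩ := hv
    exact ⟨_, _, by simpa using h.mul h'⟩
  | inv u _ hu =>
    obtain ⟨a, b, h⟩ := hu
    exact ⟨a, b, h.inv⟩

lemma pauli_signCommute {n : ℕ} {u v : (MatN n)ˣ} (hu : u ∈ PauliGroup n)
    (hv : v ∈ PauliGroup n) : SignCommute (u : MatN n) (v : MatN n) := by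
  obtain ⟨a, b, k, hu⟩ := pauli_isForm hu
  obtain ⟨a', b', k', hv⟩ := pauli_isForm hv
  have hX : ∀ j, SignCommute (u : MatN n) (Xop n j) := by
    intro j
    rw [hu]
    refine (SignCommute.smul_right (SignCommute.mul_right ?_ ?_) _).symm
    · exact signCommute_XpowVec (fun i => Or.inl (Xop_commute n j i)) a
    · exact signCommute_ZpowVec (fun i => (signCommute_ZX n i j).symm) b
  have hZ : ∀ j, SignCommute (u : MatN n) (Zop n j) := by
    intro j
    rw [hu]
    refine (SignCommute.smul_right (SignCommute.mul_right ?_ ?_) _).symm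
    · exact signCommute_XpowVec (fun i => signCommute_ZX n j i) a
    · exact signCommute_ZpowVec (fun i => Or.inl (Zop_commute n j i)) b
  rw [hv]
  exact ((signCommute_XpowVec hX a').mul_right (signCommute_ZpowVec hZ b')).smul_right _

/-- The number of tensor factors on which `X^a Z^b` acts nontrivially. -/
def supportCard {n : ℕ} (a b : Fin n → ZMod 2) : ℕ :=
  (Finset.univ.filter fun j => ¬(a j = 0 ∧ b j = 0)).card

lemma IsForm.pauliWeight_le {n : ℕ} {M : MatN n} {a b : Fin n → ZMod 2} (h : IsForm n M a b) :
    pauliWeight n M ≤ supportCard a b := by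
  obtain ⟨k, hk⟩ := h
  refine Nat.sInf_le ⟨(k : ZMod 4), a, b, ?_, rfl⟩
  rw [ZMod.val_natCast, ← Complex.I_pow_eq_pow_mod, hk]

/-- The infimum defining the weight is attained, the set being nonempty for Pauli operators. -/
lemma exists_isForm_weight {n : ℕ} {u : (MatN n)ˣ} (hu : u ∈ PauliGroup n) :
    ∃ a b, IsForm n (u : MatN n) a b ∧ supportCard a b = pauliWeight n (u : MatN n) := by
  obtain ⟨a, b, k, hk⟩ := pauli_isForm hu
  have hne : {w | ∃ (lam : ZMod 4) (a b : Fin n → ZMod 2),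
      (u : MatN n) = Complex.I ^ lam.val • (XpowVec n a * ZpowVec n b) ∧
      w = (Finset.univ.filter fun j => ¬(a j = 0 ∧ b j = 0)).card}.Nonempty :=
    ⟨_, (k : ZMod 4), a, b, by rw [ZMod.val_natCast, ← Complex.I_pow_eq_pow_mod, hk], rfl⟩
  obtain ⟨lam, a', b', h1, h2⟩ := Nat.sInf_mem hne
  exact ⟨a', b', ⟨lam.val, h1⟩, h2.symm⟩

lemma supportCard_add_le {n : ℕ} (a b a' b' : Fin n → ZMod 2) :
    supportCard (a + a') (b + b') ≤ supportCard a b + supportCard a' b' := by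
  refine le_trans (Finset.card_le_card fun j hj => ?_) (Finset.card_union_le _ _)
  simp only [Finset.mem_filter, Finset.mem_union, Finset.mem_univ, true_and, Pi.add_apply] at hj ⊢
  by_contra! hc
  exact hj (by simp [hc])

lemma pauliWeight_mul_le {n : ℕ} {u v : (MatN n)ˣ} (hu : u ∈ PauliGroup n)
    (hv : v ∈ PauliGroup n) :
    pauliWeight n ((u * v : (MatN n)ˣ) : MatN n) ≤
      pauliWeight n (u : MatN n) + pauliWeight n (v : MatN n) := by
  obtain ⟨a, b, h, hw⟩ := exists_isForm_weight hu
  obtain ⟨a', b', h', hw'⟩ := exists_isForm_weight hv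
  rw [← hw, ← hw', Units.val_mul]
  exact (h.mul h').pauliWeight_le.trans (supportCard_add_le _ _ _ _)

lemma pauliWeight_inv_le {n : ℕ} {u : (MatN n)ˣ} (hu : u ∈ PauliGroup n) :
    pauliWeight n ((u⁻¹ : (MatN n)ˣ) : MatN n) ≤ pauliWeight n (u : MatN n) := by
  obtain ⟨a, b, h, hw⟩ := exists_isForm_weight hu
  rw [← hw]
  exact h.inv.pauliWeight_le

lemma eq_phase_of_weight_zero {n : ℕ} {u : (MatN n)ˣ} (hu : u ∈ PauliGroup n)
    (h0 : pauliWeight n (u : MatN n) = 0) : ∃ k : ℕ, (u : MatN n) = Complex.I ^ k • 1 := by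
  obtain ⟨a, b, ⟨k, hk⟩, hw⟩ := exists_isForm_weight hu
  rw [h0, supportCard, Finset.card_eq_zero, Finset.filter_eq_empty_iff] at hw
  have ha : a = 0 := funext fun j => (not_not.1 (hw (Finset.mem_univ j))).1
  have hb : b = 0 := funext fun j => (not_not.1 (hw (Finset.mem_univ j))).2
  exact ⟨k, by rw [hk, ha, hb, XpowVec_zero, ZpowVec_zero, one_mul]⟩

/-- Elements of the Pauli group are unitary. -/
lemma conjTranspose_eq_inv {n : ℕ} {u : (MatN n)ˣ} (hu : u ∈ PauliGroup n) :
    (u : MatN n)ᴴ = ((u⁻¹ : (MatN n)ˣ) : MatN n) := by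
  induction hu using Subgroup.closure_induction with
  | mem u hu =>
    rw [eq_comm, ← Units.mul_eq_one_iff_inv_eq]
    rcases hu with hu | ⟨j, hu⟩ | ⟨j, hu⟩
    · rw [hu, Matrix.conjTranspose_smul, Matrix.conjTranspose_one, smul_mul_smul_comm]
      simp
    · rw [hu, Xop_conjTranspose, Xop_sq]
    · rw [hu, Zop_conjTranspose, Zop_sq]
  | one => simp
  | mul u v _ _ hu hv =>
    rw [Units.val_mul, Matrix.conjTranspose_mul, hu, hv, _root_.mul_inv_rev, Units.val_mul]
  | inv u _ hu => rw [← hu, Matrix.conjTranspose_conjTranspose, inv_inv]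

/-! ### The codespace projector -/

lemma codeProj_eq_sum (n : ℕ) (S : Subgroup (MatN n)ˣ) [Fintype S] :
    codeProj n S = (Nat.card ↥S : ℂ)⁻¹ • ∑ g : S, ((g : (MatN n)ˣ) : MatN n) := by
  rw [codeProj, ← finsum_eq_sum_of_fintype]
  congr 1
  exact (finsum_set_coe_eq_finsum_mem (s := (S : Set (MatN n)ˣ))
    (f := fun g : (MatN n)ˣ => (g : MatN n))).symm

lemma mul_codeProj {n : ℕ} {S : Subgroup (MatN n)ˣ} [Fintype S] {g : (MatN n)ˣ} (hg : g ∈ S) :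
    (g : MatN n) * codeProj n S = codeProj n S := by
  rw [codeProj_eq_sum, mul_smul_comm, Finset.mul_sum]
  congr 1
  exact Fintype.sum_equiv (Equiv.mulLeft (⟨g, hg⟩ : S)) _ _ (by intro x; simp)

lemma codeProj_mul {n : ℕ} {S : Subgroup (MatN n)ˣ} [Fintype S] {g : (MatN n)ˣ} (hg : g ∈ S) :
    codeProj n S * (g : MatN n) = codeProj n S := by
  rw [codeProj_eq_sum, smul_mul_assoc, Finset.sum_mul]
  congr 1
  exact Fintype.sum_equiv (Equiv.mulRight (⟨g, hg⟩ : S)) _ _ (by intro x; simp)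

lemma codeProj_mul_self (n : ℕ) (S : Subgroup (MatN n)ˣ) [Fintype S] :
    codeProj n S * codeProj n S = codeProj n S := by
  nth_rw 2 [codeProj_eq_sum]
  rw [mul_smul_comm, Finset.mul_sum, Finset.sum_congr rfl fun g _ => codeProj_mul g.2,
    Finset.sum_const, Finset.card_univ, ← Nat.card_eq_fintype_card, ← Nat.cast_smul_eq_nsmul ℂ,
    smul_smul, inv_mul_cancel₀ (by simp), one_smul]

lemma codeProj_phaseStab {n : ℕ} {S : Subgroup (MatN n)ˣ} [Fintype S] {M : MatN n}
    (hM : M ∈ phaseStab n S) : ∃ c : ℂ, codeProj n S * M * codeProj n S = c • codeProj n S := by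
  obtain ⟨lam, g, hg, rfl⟩ := hM
  exact ⟨Complex.I ^ lam.val,
    by rw [mul_smul_comm, codeProj_mul hg, smul_mul_assoc, codeProj_mul_self]⟩

lemma codeProj_anticomm {n : ℕ} {S : Subgroup (MatN n)ˣ} [Fintype S] {M : MatN n}
    {g : (MatN n)ˣ} (hg : g ∈ S) (h : M * (g : MatN n) = -((g : MatN n) * M)) :
    codeProj n S * M * codeProj n S = 0 := by
  have e : codeProj n S * M * codeProj n S = -(codeProj n S * M * codeProj n S) := by
    calc codeProj n S * M * codeProj n S
        = codeProj n S * (M * (g : MatN n)) * codeProj n S := by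
          nth_rw 2 [← mul_codeProj hg]; simp only [mul_assoc]
      _ = -(codeProj n S * (g : MatN n) * M * codeProj n S) := by
          rw [h]; simp only [mul_neg, neg_mul, mul_assoc]
      _ = -(codeProj n S * M * codeProj n S) := by rw [codeProj_mul hg]
  ext v w
  exact self_eq_neg.1 (congrFun (congrFun e v) w)

/-! ### The Knill–Laflamme condition -/

/-- If the code has distance at least `d` (every element of `N(S) \ ⟨i⟩S` has weight `≥ d`),
then any two Pauli errors of weight at most `(d-1)/2` satisfy the Knill–Laflamme condition,
i.e. all errors of weight at most `(d-1)/2` can be corrected. -/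
theorem distance_implies_correctable (n d : ℕ) (hn : 1 ≤ n)
    (S : Subgroup (MatN n)ˣ) (hS : S ≤ PauliGroup n)
    (habel : ∀ a ∈ S, ∀ b ∈ S, a * b = b * a)
    (hneg : (-1 : (MatN n)ˣ) ∉ S)
    (hdist : ∀ M ∈ NSmat n S, M ∉ phaseStab n S → d ≤ pauliWeight n M)
    (Ea Eb : (MatN n)ˣ) (hEa : Ea ∈ PauliGroup n) (hEb : Eb ∈ PauliGroup n)
    (hwa : 2 * pauliWeight n (Ea : MatN n) ≤ d - 1)
    (hwb : 2 * pauliWeight n (Eb : MatN n) ≤ d - 1) :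
    ∃ c : ℂ,
      codeProj n S * (((Ea : MatN n))ᴴ * (Eb : MatN n)) * codeProj n S =
        c • codeProj n S := by
  -- for infinite `S` the factor `(Nat.card S)⁻¹` is `0`, so the projector vanishes
  rcases finite_or_infinite S with hfin | hinf
  swap
  · exact ⟨0, by simp [codeProj]⟩
  have : Fintype S := Fintype.ofFinite S
  rw [conjTranspose_eq_inv hEa, ← Units.val_mul]
  have hE : Ea⁻¹ * Eb ∈ PauliGroup n := mul_mem (inv_mem hEa) hEb
  have hw := pauliWeight_mul_le (inv_mem hEa) hEb
  have hw' := pauliWeight_inv_le hEa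
  generalize Ea⁻¹ * Eb = E at hE hw ⊢
  by_cases hc : ∀ g ∈ S, (E : MatN n) * (g : MatN n) = (g : MatN n) * E
  · apply codeProj_phaseStab
    by_contra hp
    have hd := hdist E ⟨⟨E, hE, rfl⟩, hc⟩ hp
    -- `d ≤ w(E) ≤ d - 1` in truncated subtraction leaves only `d = 0` and `w(E) = 0`
    obtain ⟨k, hk⟩ := eq_phase_of_weight_zero hE (by omega)
    refine hp ⟨(k : ZMod 4), 1, one_mem S, ?_⟩
    rw [ZMod.val_natCast, ← Complex.I_pow_eq_pow_mod, hk, Units.val_one]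
  · push Not at hc
    obtain ⟨g, hg, hne⟩ := hc
    refine ⟨0, ?_⟩
    rw [zero_smul]
    exact codeProj_anticomm hg ((pauli_signCommute hE (hS hg)).resolve_left hne)
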